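/- Let R be a commutative ring, M an R-module, T, Y : M →ₗ[R] M linear endomorphisms, and c ∈ R. Define F : M × M →ₗ[R] M × M by F (x, y) = (−(c • x) − T y − c • (Y y), −x − Y y). Then the cokernel (M × M) ⧸ (LinearMap.range F) is isomorphic as an R-module to M ⧸ (LinearMap.range T). -/

import Mathlib

/-!
Subtracting `A C⁻¹` times the second row of a block map `[[A, B], [C, D]]` with `C` invertible
clears `A`, so `(a, b)` lies in the range exactly when `a - A C⁻¹ b` lies in the range of
`B - A C⁻¹ D`. For the map `F` of the theorem, `A = -c`, `B = -T - cY`, `C = -1`, `D = -Y`, and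
`B - A C⁻¹ D = -T`.
-/

/-- The isomorphism `M ⧸ f⁻¹(p) ≃ N ⧸ p` induced by a surjection `f : M → N`. -/
noncomputable def quotientComapEquivOfSurjective {R M N : Type*} [Ring R]
    [AddCommGroup M] [Module R M] [AddCommGroup N] [Module R N]
    (f : M →ₗ[R] N) (hf : Function.Surjective f) (p : Submodule R N) :
    (M ⧸ p.comap f) ≃ₗ[R] N ⧸ p :=
  (Submodule.quotEquivOfEq _ _ (by rw [LinearMap.ker_comp, Submodule.ker_mkQ])).trans
    ((p.mkQ ∘ₗ f).quotKerEquivOfSurjective (p.mkQ_surjective.comp hf))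

section SchurComplement

variable {R M₁ M₂ N₁ N₂ : Type*} [Ring R]
  [AddCommGroup M₁] [Module R M₁] [AddCommGroup M₂] [Module R M₂]
  [AddCommGroup N₁] [Module R N₁] [AddCommGroup N₂] [Module R N₂]

/-- The linear map `M₁ × M₂ → N₁ × N₂` with block matrix `[[A, B], [C, D]]`. -/
def blockMap (A : M₁ →ₗ[R] N₁) (B : M₂ →ₗ[R] N₁) (C : M₁ →ₗ[R] N₂) (D : M₂ →ₗ[R] N₂) :
    M₁ × M₂ →ₗ[R] N₁ × N₂ :=
  (A.coprod B).prod (C.coprod D)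

/-- The Schur complement `B - A C⁻¹ D` of the invertible lower left block `C` of
`[[A, B], [C, D]]`. -/
def schurComplement (A : M₁ →ₗ[R] N₁) (B : M₂ →ₗ[R] N₁) (C : M₁ ≃ₗ[R] N₂) (D : M₂ →ₗ[R] N₂) :
    M₂ →ₗ[R] N₁ :=
  B - A ∘ₗ C.symm ∘ₗ D

/-- The first coordinate `(a, b) ↦ a - A C⁻¹ b` of the row operation that clears `A` in
`[[A, B], [C, D]]`. -/
def rowReduction (A : M₁ →ₗ[R] N₁) (C : M₁ ≃ₗ[R] N₂) : N₁ × N₂ →ₗ[R] N₁ :=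
  LinearMap.fst R N₁ N₂ - A ∘ₗ C.symm ∘ₗ LinearMap.snd R N₁ N₂

@[simp]
theorem blockMap_apply (A : M₁ →ₗ[R] N₁) (B : M₂ →ₗ[R] N₁) (C : M₁ →ₗ[R] N₂) (D : M₂ →ₗ[R] N₂)
    (x : M₁) (y : M₂) : blockMap A B C D (x, y) = (A x + B y, C x + D y) :=
  rfl

variable (A : M₁ →ₗ[R] N₁) (B : M₂ →ₗ[R] N₁) (C : M₁ ≃ₗ[R] N₂) (D : M₂ →ₗ[R] N₂)

@[simp]
theorem schurComplement_apply (y : M₂) :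
    schurComplement A B C D y = B y - A (C.symm (D y)) :=
  rfl

@[simp]
theorem rowReduction_apply (a : N₁) (b : N₂) : rowReduction A C (a, b) = a - A (C.symm b) :=
  rfl

theorem rowReduction_surjective : Function.Surjective (rowReduction A C) := fun a ↦
  ⟨(a, 0), by simp⟩

theorem rowReduction_blockMap (x : M₁) (y : M₂) :
    rowReduction A C (blockMap A B C D (x, y)) = schurComplement A B C D y := by
  simp

theorem range_blockMap :
    LinearMap.range (blockMap A B C D) =
      (LinearMap.range (schurComplement A B C D)).comap (rowReduction A C) := by
  ext ⟨a, b⟩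
  constructor
  · rintro ⟨⟨x, y⟩, hxy⟩
    exact ⟨y, by rw [← hxy, rowReduction_blockMap]⟩
  · rintro ⟨y, hy⟩
    rw [schurComplement_apply, rowReduction_apply] at hy
    -- The second coordinate of the equation to be solved forces `x = C⁻¹ (b - D y)`.
    refine ⟨(C.symm (b - D y), y), Prod.ext ?_ ?_⟩
    · calc A (C.symm (b - D y)) + B y
          = A (C.symm b) + (B y - A (C.symm (D y))) := by rw [map_sub, map_sub]; abel
        _ = a := by rw [hy, add_sub_cancel]
    · simp

/-- A block map with invertible lower left block has the same cokernel as its Schur complement. -/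
noncomputable def cokerBlockMapEquiv :
    ((N₁ × N₂) ⧸ LinearMap.range (blockMap A B C D)) ≃ₗ[R]
      N₁ ⧸ LinearMap.range (schurComplement A B C D) :=
  (Submodule.quotEquivOfEq _ _ (range_blockMap A B C D)).trans
    (quotientComapEquivOfSurjective _ (rowReduction_surjective A C) _)

end SchurComplement

theorem stmt_3_general {R M N P : Type*} [Ring R] [AddCommGroup M] [Module R M]
    [AddCommGroup N] [Module R N] [AddCommGroup P] [Module R P]
    (T : M →ₗ[R] N) (Y : M →ₗ[R] P) (A : P →ₗ[R] N) (F : P × M →ₗ[R] N × P)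
    (hF : ∀ x y, F (x, y) = (-A x - T y - A (Y y), -x - Y y)) :
    Nonempty (((N × P) ⧸ LinearMap.range F) ≃ₗ[R] N ⧸ LinearMap.range T) := by
  let C : P ≃ₗ[R] P := LinearEquiv.neg R
  have hF_block : F = blockMap (-A) (-T - A ∘ₗ Y) C (-Y) := by
    ext : 2 <;> simp [hF, C, sub_eq_add_neg]
  have h_schur : schurComplement (-A) (-T - A ∘ₗ Y) C (-Y) = -T := by
    ext y
    simp [C]
  have h_range : LinearMap.range (schurComplement (-A) (-T - A ∘ₗ Y) C (-Y)) =
      LinearMap.range T := by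
    rw [h_schur, LinearMap.range_neg]
  rw [hF_block]
  exact ⟨(cokerBlockMapEquiv _ _ C _).trans (Submodule.quotEquivOfEq _ _ h_range)⟩

/-- Proposition 5.5(3): the cokernel of `F` is isomorphic to the cokernel of `T`. -/
theorem stmt_3 (R : Type*) [CommRing R] (M : Type*) [AddCommGroup M] [Module R M]
    (T Y : M →ₗ[R] M) (c : R)
    (F : M × M →ₗ[R] M × M)
    (hF : ∀ x y : M, F (x, y) = (-(c • x) - T y - c • (Y y), -x - Y y)) :
    Nonempty (((M × M) ⧸ LinearMap.range F) ≃ₗ[R] (M ⧸ LinearMap.range T)) :=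
  stmt_3_general T Y (c • LinearMap.id) F hF
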